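/- Let m ≥ 2 and p ≥ 2 be integers and n = m·p. The map ψ : ℤ_n → ℤ_n defined by ψ(i + r·p) = (p − 1 − i) + r·p for 0 ≤ i ≤ p−1 and 0 ≤ r ≤ m−1 is an automorphism of the circulant graph C(m,p). -/

import Mathlib

/-!
The jump set consists exactly of the residues mod `m * p` whose reduction mod `p` is `1` or `-1`
(`mem_jumpSet_iff`), so adjacency in `C(m,p)` depends only on the difference of the endpoints
mod `p`. The map `ψ` preserves the quotient `r` and reflects the remainder `i ↦ p - 1 - i`: it is
an involution, hence a permutation, and it acts mod `p` as `x ↦ -1 - x` (`castHom_blockReflect`).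
Differences are therefore negated mod `p`, and `{1, -1}` is stable under negation.
-/

/-- A permutation of the vertices is a graph automorphism if it preserves adjacency. -/
def IsGraphAut {V : Type*} (G : SimpleGraph V) (σ : Equiv.Perm V) : Prop :=
  ∀ u v : V, G.Adj (σ u) (σ v) ↔ G.Adj u v

/-- A labeling with `r` labels is distinguishing if no nontrivial automorphism preserves it. -/
def IsDistinguishing {V : Type*} (G : SimpleGraph V) {r : ℕ} (c : V → Fin r) : Prop :=
  ∀ σ : Equiv.Perm V, IsGraphAut G σ → (∀ v, c (σ v) = c v) → σ = Equiv.refl V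

/-- The distinguishing number of a graph: the least `r` admitting an `r`-distinguishing
labeling. -/
noncomputable def distinguishingNumber {V : Type*} (G : SimpleGraph V) : ℕ :=
  sInf {r : ℕ | ∃ c : V → Fin r, IsDistinguishing G c}

/-- The jump set `A = {p-1+r·p, p+1+r·p : 0 ≤ r ≤ m-1}` inside `ℤ_{mp}`. -/
def jumpSet (m p : ℕ) : Set (ZMod (m * p)) :=
  {a | ∃ r < m, a = ((p - 1 + r * p : ℕ) : ZMod (m * p)) ∨
                a = ((p + 1 + r * p : ℕ) : ZMod (m * p))}

/-- The circulant graph `C(m,p)` on vertex set `ℤ_{mp}`: `i` and `j` are adjacent iff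
`j - i (mod mp)` lies in the jump set. -/
def circC (m p : ℕ) : SimpleGraph (ZMod (m * p)) :=
  SimpleGraph.circulantGraph (jumpSet m p)

/-- The set `M_i = {i + r·p : 0 ≤ r ≤ m-1}` in `ℤ_{mp}`. -/
def Mset (m p i : ℕ) : Set (ZMod (m * p)) :=
  {v | ∃ r < m, v = ((i + r * p : ℕ) : ZMod (m * p))}

/-- The map `ψ`, which sends `i + r * p` to `(p - 1 - i) + r * p`, where `i` and `r` are read off
the representative of the vertex in `[0, m * p)` by division by `p`. -/
def blockReflect (m p : ℕ) (v : ZMod (m * p)) : ZMod (m * p) :=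
  ((p - 1 - v.val % p + v.val / p * p : ℕ) : ZMod (m * p))

theorem blockReflect_apply {m p i r : ℕ} (hi : i < p) (hr : r < m) :
    blockReflect m p ((i + r * p : ℕ) : ZMod (m * p)) =
      ((p - 1 - i + r * p : ℕ) : ZMod (m * p)) := by
  have hlt : i + r * p < m * p := by nlinarith
  have hp : 0 < p := by omega
  rw [blockReflect, ZMod.val_cast_of_lt hlt, Nat.add_mul_mod_self_right, Nat.mod_eq_of_lt hi,
    Nat.add_mul_div_right _ _ hp, Nat.div_eq_of_lt hi, zero_add]

theorem exists_block_coords {m p : ℕ} (hm : 0 < m) (hp : 0 < p) (v : ZMod (m * p)) :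
    ∃ i < p, ∃ r < m, v = ((i + r * p : ℕ) : ZMod (m * p)) := by
  have : NeZero (m * p) := ⟨(Nat.mul_pos hm hp).ne'⟩
  refine ⟨v.val % p, Nat.mod_lt _ hp, v.val / p, ?_, ?_⟩
  · exact (Nat.div_lt_iff_lt_mul hp).2 v.val_lt
  · rw [Nat.mod_add_div', ZMod.natCast_rightInverse v]

theorem blockReflect_involutive {m p : ℕ} (hm : 0 < m) (hp : 0 < p) :
    Function.Involutive (blockReflect m p) := by
  intro v
  obtain ⟨i, hi, r, hr, rfl⟩ := exists_block_coords hm hp v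
  rw [blockReflect_apply hi hr, blockReflect_apply (by omega) hr]
  congr 2
  omega

theorem castHom_blockReflect {m p : ℕ} (hm : 0 < m) (hp : 0 < p) (v : ZMod (m * p)) :
    ZMod.castHom (Dvd.intro_left m rfl) (ZMod p) (blockReflect m p v) =
      -1 - ZMod.castHom (Dvd.intro_left m rfl) (ZMod p) v := by
  obtain ⟨i, hi, r, hr, rfl⟩ := exists_block_coords hm hp v
  rw [blockReflect_apply hi hr, map_natCast, map_natCast, Nat.sub_sub]
  push_cast [Nat.cast_sub (show 1 + i ≤ p by omega)]
  simp
  ring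

theorem mem_jumpSet_iff {m p : ℕ} (hm : 0 < m) (hp : 2 ≤ p) (a : ZMod (m * p)) :
    a ∈ jumpSet m p ↔
      ZMod.castHom (Dvd.intro_left m rfl) (ZMod p) a = 1 ∨
        ZMod.castHom (Dvd.intro_left m rfl) (ZMod p) a = -1 := by
  constructor
  · rintro ⟨r, -, rfl | rfl⟩
    · right
      rw [map_natCast]
      push_cast [Nat.cast_sub (show 1 ≤ p by omega)]
      simp
    · left
      rw [map_natCast]
      push_cast
      simp
  · obtain ⟨i, hi, q, hq, rfl⟩ := exists_block_coords hm (by omega) a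
    rw [map_natCast]
    push_cast
    simp only [CharP.cast_eq_zero, mul_zero, add_zero]
    rintro (h | h)
    · have h1 : i = 1 := by
        have := (ZMod.natCast_eq_natCast_iff' i 1 p).1 (by simpa using h)
        rwa [Nat.mod_eq_of_lt hi, Nat.mod_eq_of_lt (by omega)] at this
      subst h1
      -- `1 + q * p = p + 1 + (q - 1) * p`, where for `q = 0` the index `q - 1` wraps to `m - 1`.
      rcases q with _ | q
      · refine ⟨m - 1, by omega, Or.inr ?_⟩
        have : p + 1 + (m - 1) * p = 1 + m * p := by
          obtain ⟨k, rfl⟩ : ∃ k, m = k + 1 := ⟨m - 1, by omega⟩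
          simp only [Nat.add_sub_cancel]
          ring
        rw [this, Nat.cast_add 1 (m * p), ZMod.natCast_self]
        simp
      · refine ⟨q, by omega, Or.inr ?_⟩
        push_cast
        ring
    · have h1 : i = p - 1 := by
        have h2 : ((i + 1 : ℕ) : ZMod p) = 0 := by
          push_cast
          rw [h]
          ring
        have := Nat.le_of_dvd (by omega) ((ZMod.natCast_eq_zero_iff _ _).1 h2)
        omega
      subst h1
      exact ⟨q, hq, Or.inl (by push_cast; rfl)⟩

theorem stmt_14 (m p : ℕ) (hm : 2 ≤ m) (hp : 2 ≤ p) :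
    ∃ ψ : Equiv.Perm (ZMod (m * p)),
      (∀ i < p, ∀ r < m,
        ψ ((i + r * p : ℕ) : ZMod (m * p)) = ((p - 1 - i + r * p : ℕ) : ZMod (m * p))) ∧
      IsGraphAut (circC m p) ψ := by
  have hm0 : 0 < m := by omega
  have hp0 : 0 < p := by omega
  have hinv := blockReflect_involutive hm0 hp0
  refine ⟨hinv.toPerm, fun i hi r hr => blockReflect_apply hi hr, fun u v => ?_⟩
  have key : ∀ x y, blockReflect m p x - blockReflect m p y ∈ jumpSet m p ↔
      x - y ∈ jumpSet m p := by
    intro x y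
    rw [mem_jumpSet_iff hm0 hp, mem_jumpSet_iff hm0 hp, map_sub, map_sub,
      castHom_blockReflect hm0 hp0, castHom_blockReflect hm0 hp0, sub_sub_sub_cancel_left,
      ← neg_sub (ZMod.castHom _ (ZMod p) x), neg_inj, neg_eq_iff_eq_neg, or_comm]
  simp only [circC, SimpleGraph.circulantGraph_adj, Function.Involutive.coe_toPerm, key,
    hinv.injective.eq_iff, ne_eq]
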